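/- Let 𝔨 = span_ℝ{iI_x, iI_y, iI_z, iS_x, iS_y, iS_z} and 𝔪 = span_ℝ{i I_αS_β : α, β ∈ {x,y,z}} inside su(4). Then su(4) = 𝔪 ⊕ 𝔨 is a direct sum which is orthogonal with respect to the inner product ⟨A,B⟩ = tr(A†B), and the commutation relations [𝔨,𝔨] ⊆ 𝔨, [𝔪,𝔨] ⊆ 𝔪, and [𝔪,𝔪] ⊆ 𝔨 hold (i.e. (su(4), 𝔨) is a symmetric pair). -/

import Mathlib

open Kronecker
open scoped Matrix

/-- One half times the Pauli matrix `σ_x`. -/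
noncomputable def pax : Matrix (Fin 2) (Fin 2) ℂ := (1 / 2 : ℂ) • !![0, 1; 1, 0]

/-- One half times the Pauli matrix `σ_y`. -/
noncomputable def pay : Matrix (Fin 2) (Fin 2) ℂ :=
  (1 / 2 : ℂ) • !![0, -Complex.I; Complex.I, 0]

/-- One half times the Pauli matrix `σ_z`. -/
noncomputable def paz : Matrix (Fin 2) (Fin 2) ℂ := (1 / 2 : ℂ) • !![1, 0; 0, -1]

/-- The three spin-1/2 operators, indexed by `Fin 3` (`0 ↦ x`, `1 ↦ y`, `2 ↦ z`). -/
noncomputable def pauli : Fin 3 → Matrix (Fin 2) (Fin 2) ℂ := ![pax, pay, paz]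

/-- The first-spin operators `I_α = σ_α ⊗ 1`. -/
noncomputable def Iop (a : Fin 3) : Matrix (Fin 2 × Fin 2) (Fin 2 × Fin 2) ℂ :=
  pauli a ⊗ₖ (1 : Matrix (Fin 2) (Fin 2) ℂ)

/-- The second-spin operators `S_α = 1 ⊗ σ_α`. -/
noncomputable def Sop (a : Fin 3) : Matrix (Fin 2 × Fin 2) (Fin 2 × Fin 2) ℂ :=
  (1 : Matrix (Fin 2) (Fin 2) ℂ) ⊗ₖ pauli a

noncomputable abbrev Ix' := Iop 0
noncomputable abbrev Iy' := Iop 1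
noncomputable abbrev Iz' := Iop 2
noncomputable abbrev Sx' := Sop 0
noncomputable abbrev Sy' := Sop 1
noncomputable abbrev Sz' := Sop 2

/-- The subgroup `K = {k₁ ⊗ k₂ : k₁, k₂ ∈ SU(2)}` of `SU(4)`. -/
def K2 : Set (Matrix (Fin 2 × Fin 2) (Fin 2 × Fin 2) ℂ) :=
  {g | ∃ k₁ ∈ Matrix.specialUnitaryGroup (Fin 2) ℂ,
       ∃ k₂ ∈ Matrix.specialUnitaryGroup (Fin 2) ℂ, g = k₁ ⊗ₖ k₂}

/-- `𝔨 = span_ℝ{iI_x, iI_y, iI_z, iS_x, iS_y, iS_z}`. -/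
noncomputable def kLie : Submodule ℝ (Matrix (Fin 2 × Fin 2) (Fin 2 × Fin 2) ℂ) :=
  Submodule.span ℝ
    ((Set.range fun a => Complex.I • Iop a) ∪ (Set.range fun a => Complex.I • Sop a))

/-- `𝔪 = span_ℝ{i I_αS_β : α, β ∈ {x,y,z}}`. -/
noncomputable def mLie : Submodule ℝ (Matrix (Fin 2 × Fin 2) (Fin 2 × Fin 2) ℂ) :=
  Submodule.span ℝ {A | ∃ a b : Fin 3, A = Complex.I • (Iop a * Sop b)}

/-!
For the antisymmetric form `ε` on `ℂ²` one has `ε Pᵀ ε = P - tr P`, so the map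
`θ A = -(ε ⊗ ε) Aᵀ (ε ⊗ ε)` acts on Kronecker products by `θ (P ⊗ Q) = -(P - tr P) ⊗ (Q - tr Q)`.
Hence `θ` fixes every `I_α` and `S_α` and negates every `I_α S_β`. As `θ` is a Lie algebra
endomorphism preserving the form `tr (A B)`, its eigenspaces for `1` and `-1` in `𝔰𝔲(4)` are
independent, orthogonal, and satisfy the commutation relations of a symmetric pair. These
eigenspaces are `𝔨` and `𝔪`: together with `i 1` the generators span `𝔤𝔩₄(ℂ)` over `ℂ`, hence all
skew-Hermitian matrices over `ℝ`, and a trace-zero combination does not involve `i 1`.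
-/

attribute [local instance] LieRing.ofAssociativeRing

section LieEndomorphism

variable {R L : Type*} [CommRing R] [LieRing L] [LieAlgebra R L]

theorem lie_mem_eigenspace_mul (θ : L →ₗ⁅R⁆ L) {μ ν : R} {x y : L}
    (hx : x ∈ Module.End.eigenspace (θ : L →ₗ[R] L) μ)
    (hy : y ∈ Module.End.eigenspace (θ : L →ₗ[R] L) ν) :
    ⁅x, y⁆ ∈ Module.End.eigenspace (θ : L →ₗ[R] L) (μ * ν) := by
  rw [Module.End.mem_eigenspace_iff, LieHom.coe_toLinearMap] at *
  rw [LieHom.map_lie, hx, hy, smul_lie, lie_smul, mul_smul]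

end LieEndomorphism

theorem sup_inf_eq_left_of_disjoint {α : Type*} [Lattice α] [IsModularLattice α] [OrderBot α]
    {a b c d : α} (hac : a ≤ c) (hbd : b ≤ d) (hcd : Disjoint c d) : (a ⊔ b) ⊓ c = a := by
  rw [sup_inf_assoc_of_le b hac, (hcd.symm.mono_left hbd).eq_bot, sup_bot_eq]

theorem mem_span_real_of_mem_skewAdjoint {E : Type*} [AddCommGroup E] [Module ℂ E]
    [StarAddMonoid E] [StarModule ℂ E] {s : Set E} (hs : s ⊆ skewAdjoint E) {x : E}
    (hx : x ∈ skewAdjoint E) (hxs : x ∈ Submodule.span ℂ s) : x ∈ Submodule.span ℝ s := by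
  obtain ⟨k, c, v, rfl⟩ := Submodule.mem_span_set'.mp hxs
  have star_v (i : Fin k) : star (v i : E) = -v i := skewAdjoint.mem_iff.mp (hs (v i).2)
  have conj_coeff : ∑ i, c i • (v i : E) = ∑ i, star (c i) • (v i : E) := by
    simpa [star_v] using (neg_eq_iff_eq_neg.mpr (skewAdjoint.mem_iff.mp hx)).symm
  -- Both sides of `conj_coeff` equal `x`, hence so does their average.
  have re_coeff : ∑ i, c i • (v i : E) = ∑ i, (c i).re • (v i : E) := by
    calc ∑ i, c i • (v i : E)
        = (1 / 2 : ℝ) • (∑ i, c i • (v i : E) + ∑ i, star (c i) • (v i : E)) := by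
          rw [← conj_coeff, ← two_smul ℝ, smul_smul, one_div_mul_cancel two_ne_zero, one_smul]
      _ = ∑ i, (c i).re • (v i : E) := by
          simp only [← Finset.sum_add_distrib, ← add_smul, Finset.smul_sum, Complex.star_def,
            Complex.add_conj, Complex.coe_smul, smul_smul]
          simp
  rw [re_coeff]
  exact Submodule.sum_mem _ fun i _ ↦ Submodule.smul_mem _ _ (Submodule.subset_span (v i).2)

section Matrix

variable {n R : Type*} [Fintype n] [DecidableEq n] [CommRing R]

/-- The Lie algebra endomorphism `A ↦ -J Aᵀ J` of `𝔤𝔩ₙ` attached to a matrix `J` with `J² = 1`. -/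
def negTransposeConj (J : Matrix n n R) (hJ : J * J = 1) : Matrix n n R →ₗ⁅R⁆ Matrix n n R where
  toFun A := -(J * Aᵀ * J)
  map_add' A B := by
    rw [Matrix.transpose_add, Matrix.mul_add, Matrix.add_mul, neg_add]
  map_smul' c A := by simp
  map_lie' {A B} := by
    have conj_mul (C D : Matrix n n R) : J * C * J * (J * D * J) = J * (C * D) * J := by
      rw [show J * C * J * (J * D * J) = J * C * (J * J) * (D * J) by simp only [Matrix.mul_assoc],
        hJ]
      simp only [Matrix.mul_assoc, Matrix.one_mul]
    simp only [Ring.lie_def, Matrix.transpose_sub, Matrix.transpose_mul, Matrix.mul_sub,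
      Matrix.sub_mul, neg_mul_neg, conj_mul, neg_sub]

variable {J : Matrix n n R} (hJ : J * J = 1)

theorem negTransposeConj_apply (A : Matrix n n R) : negTransposeConj J hJ A = -(J * Aᵀ * J) := rfl

theorem trace_negTransposeConj_mul (A B : Matrix n n R) :
    (negTransposeConj J hJ A * negTransposeConj J hJ B).trace = (A * B).trace := by
  calc (negTransposeConj J hJ A * negTransposeConj J hJ B).trace
      = ((J * J) * Aᵀ * (J * J) * Bᵀ).trace := by
        rw [negTransposeConj_apply, negTransposeConj_apply, neg_mul_neg, ← Matrix.mul_assoc,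
          Matrix.trace_mul_comm]
        simp only [Matrix.mul_assoc]
    _ = (A * B).trace := by
        rw [hJ, Matrix.one_mul, Matrix.mul_one, ← Matrix.transpose_mul, Matrix.trace_transpose,
          Matrix.trace_mul_comm]

theorem trace_mul_eq_zero_of_mem_eigenspace [IsDomain R] {μ ν : R} (hμν : μ * ν ≠ 1)
    {A B : Matrix n n R}
    (hA : A ∈ Module.End.eigenspace (negTransposeConj J hJ : Matrix n n R →ₗ[R] Matrix n n R) μ)
    (hB : B ∈ Module.End.eigenspace (negTransposeConj J hJ : Matrix n n R →ₗ[R] Matrix n n R) ν) :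
    (A * B).trace = 0 := by
  rw [Module.End.mem_eigenspace_iff, LieHom.coe_toLinearMap] at hA hB
  have h : μ * ν * (A * B).trace = (A * B).trace := by
    conv_rhs => rw [← trace_negTransposeConj_mul hJ, hA, hB]
    rw [Matrix.smul_mul, Matrix.mul_smul, smul_smul, Matrix.trace_smul, smul_eq_mul]
  exact (mul_left_eq_self₀.mp h).resolve_left hμν

end Matrix

theorem map₂_kroneckerBilinear_top {R l m n p : Type*} [CommSemiring R] [Finite l] [Finite m]
    [Finite n] [Finite p] :
    Submodule.map₂ (Matrix.kroneckerBilinear (R := R) (α := R) (l := l) (m := m) (n := n) (p := p))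
      ⊤ ⊤ = ⊤ := by
  classical
  have := Fintype.ofFinite l
  have := Fintype.ofFinite m
  have := Fintype.ofFinite n
  have := Fintype.ofFinite p
  refine eq_top_iff.mpr fun A _ ↦ ?_
  rw [Matrix.matrix_eq_sum_single A]
  refine Submodule.sum_mem _ fun i _ ↦ Submodule.sum_mem _ fun j _ ↦ ?_
  have h : Matrix.single i j (A i j) =
      Matrix.single i.1 j.1 (A i j) ⊗ₖ Matrix.single i.2 j.2 (1 : R) := by
    rw [Matrix.single_kronecker_single, mul_one]
  rw [h]
  exact Submodule.apply_mem_map₂ Matrix.kroneckerBilinear Submodule.mem_top Submodule.mem_top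

/-- The Lie algebra `𝔰𝔲(n)` of traceless skew-Hermitian matrices, inside `𝔤𝔩ₙ(ℂ)` viewed as a real
Lie algebra. -/
noncomputable def suLie (n : Type*) [Fintype n] [DecidableEq n] :
    LieSubalgebra ℝ (Matrix n n ℂ) where
  __ := skewAdjoint.submodule ℝ (Matrix n n ℂ) ⊓ LinearMap.ker (Matrix.traceLinearMap n ℝ ℂ)
  lie_mem' {A B} hA hB := by
    obtain ⟨hA, -⟩ : Aᴴ = -A ∧ A.trace = 0 := hA
    obtain ⟨hB, -⟩ : Bᴴ = -B ∧ B.trace = 0 := hB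
    refine ⟨?_, LieAlgebra.matrix_trace_commutator_zero n ℂ A B⟩
    change (A * B - B * A)ᴴ = -(A * B - B * A)
    rw [Matrix.conjTranspose_sub, Matrix.conjTranspose_mul, Matrix.conjTranspose_mul, hA, hB,
      neg_mul_neg, neg_mul_neg, neg_sub]

theorem mem_suLie {n : Type*} [Fintype n] [DecidableEq n] {A : Matrix n n ℂ} :
    A ∈ suLie n ↔ Aᴴ = -A ∧ A.trace = 0 := Iff.rfl

theorem I_smul_kronecker_mem_suLie {m n : Type*} [Fintype m] [Fintype n] [DecidableEq m]
    [DecidableEq n] {P : Matrix m m ℂ} {Q : Matrix n n ℂ} (hP : P.IsHermitian) (hQ : Q.IsHermitian)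
    (h : P.trace = 0 ∨ Q.trace = 0) : Complex.I • (P ⊗ₖ Q) ∈ suLie (m × n) := by
  refine mem_suLie.mpr ⟨?_, ?_⟩
  · simp [Matrix.conjTranspose_kronecker, hP.eq, hQ.eq]
  · rw [Matrix.trace_smul, Matrix.trace_kronecker, mul_eq_zero.mpr h, smul_zero]

theorem isHermitian_pauli (a : Fin 3) : (pauli a).IsHermitian := by
  ext i j
  fin_cases a <;> fin_cases i <;> fin_cases j <;> simp [pauli, pax, pay, paz]

theorem trace_pauli (a : Fin 3) : (pauli a).trace = 0 := by
  fin_cases a <;> simp [pauli, pax, pay, paz, Matrix.trace_fin_two]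

theorem eq_trace_smul_one_add_sum_pauli (P : Matrix (Fin 2) (Fin 2) ℂ) :
    P = (P.trace / 2) • 1 + ∑ a, (2 * (pauli a * P).trace) • pauli a := by
  ext i j
  fin_cases i <;> fin_cases j <;>
    simp [pauli, pax, pay, paz, Matrix.trace_fin_two, Fin.sum_univ_three, Matrix.mul_apply] <;>
    grind [Complex.I_mul_I]

theorem span_insert_one_range_pauli :
    Submodule.span ℂ (insert 1 (Set.range pauli)) = ⊤ := by
  refine eq_top_iff.mpr fun P _ ↦ ?_
  rw [eq_trace_smul_one_add_sum_pauli P]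
  exact Submodule.add_mem _ (Submodule.smul_mem _ _ (Submodule.subset_span (Set.mem_insert _ _)))
    (Submodule.sum_mem _ fun a _ ↦ Submodule.smul_mem _ _
      (Submodule.subset_span (Set.mem_insert_of_mem _ (Set.mem_range_self a))))

/-- The antisymmetric bilinear form `ε` on `R²`, which intertwines a `2 × 2` matrix of trace zero
with the negative of its transpose. -/
def spinorForm (R : Type*) [CommRing R] : Matrix (Fin 2) (Fin 2) R := !![0, -1; 1, 0]

section SpinorForm

variable {R : Type*} [CommRing R]

theorem spinorForm_mul_transpose_mul (P : Matrix (Fin 2) (Fin 2) R) :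
    spinorForm R * Pᵀ * spinorForm R = P - P.trace • 1 := by
  ext i j
  simp only [Matrix.mul_apply, Fin.sum_univ_two]
  fin_cases i <;> fin_cases j <;> simp [spinorForm, Matrix.trace_fin_two]

theorem spinorForm_kronecker_mul_self :
    (spinorForm R ⊗ₖ spinorForm R) * (spinorForm R ⊗ₖ spinorForm R) = 1 := by
  have mul_self : spinorForm R * spinorForm R = (-1 : R) • 1 := by
    simp [spinorForm, Matrix.one_fin_two]
  rw [← Matrix.mul_kronecker_mul, mul_self, Matrix.smul_kronecker, Matrix.kronecker_smul,
    Matrix.one_kronecker_one, smul_smul, neg_one_mul, neg_neg, one_smul]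

end SpinorForm

/-- The Cartan involution `θ A = -(ε ⊗ ε) Aᵀ (ε ⊗ ε)` of the pair `(𝔰𝔲(4), 𝔨)`, as a complex linear
map on all of `𝔤𝔩₄(ℂ)`. -/
def cartanInvolution :
    Matrix (Fin 2 × Fin 2) (Fin 2 × Fin 2) ℂ →ₗ⁅ℂ⁆ Matrix (Fin 2 × Fin 2) (Fin 2 × Fin 2) ℂ :=
  negTransposeConj (spinorForm ℂ ⊗ₖ spinorForm ℂ) spinorForm_kronecker_mul_self

theorem cartanInvolution_kronecker (P Q : Matrix (Fin 2) (Fin 2) ℂ) :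
    cartanInvolution (P ⊗ₖ Q) = -((P - P.trace • 1) ⊗ₖ (Q - Q.trace • 1)) := by
  rw [cartanInvolution, negTransposeConj_apply, ← Matrix.kroneckerMap_transpose,
    ← Matrix.mul_kronecker_mul, ← Matrix.mul_kronecker_mul, spinorForm_mul_transpose_mul,
    spinorForm_mul_transpose_mul]

theorem Iop_mul_Sop (a b : Fin 3) : Iop a * Sop b = pauli a ⊗ₖ pauli b := by
  rw [Iop, Sop, ← Matrix.mul_kronecker_mul, Matrix.mul_one, Matrix.one_mul]

theorem one_sub_trace_smul_one {R : Type*} [CommRing R] :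
    (1 : Matrix (Fin 2) (Fin 2) R) - (1 : Matrix (Fin 2) (Fin 2) R).trace • 1 = (-1 : R) • 1 := by
  rw [Matrix.trace_one, Fintype.card_fin]
  module

theorem cartanInvolution_Iop (a : Fin 3) : cartanInvolution (Iop a) = Iop a := by
  rw [Iop, cartanInvolution_kronecker, trace_pauli, one_sub_trace_smul_one, zero_smul, sub_zero,
    Matrix.kronecker_smul, neg_one_smul, neg_neg]

theorem cartanInvolution_Sop (a : Fin 3) : cartanInvolution (Sop a) = Sop a := by
  rw [Sop, cartanInvolution_kronecker, trace_pauli, one_sub_trace_smul_one, zero_smul, sub_zero,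
    Matrix.smul_kronecker, neg_one_smul, neg_neg]

theorem cartanInvolution_Iop_mul_Sop (a b : Fin 3) :
    cartanInvolution (Iop a * Sop b) = -(Iop a * Sop b) := by
  rw [Iop_mul_Sop, cartanInvolution_kronecker, trace_pauli, trace_pauli]
  simp only [zero_smul, sub_zero]

/-- The `μ`-eigenspace of the Cartan involution on `𝔰𝔲(4)`. It is cut out of the complex
eigenspace in `𝔤𝔩₄(ℂ)`, which is stable under multiplication by `i`. -/
noncomputable def suEigenspace (μ : ℂ) : Submodule ℝ (Matrix (Fin 2 × Fin 2) (Fin 2 × Fin 2) ℂ) :=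
  (suLie (Fin 2 × Fin 2)).toSubmodule ⊓
    (Module.End.eigenspace (cartanInvolution : Matrix (Fin 2 × Fin 2) (Fin 2 × Fin 2) ℂ →ₗ[ℂ]
      Matrix (Fin 2 × Fin 2) (Fin 2 × Fin 2) ℂ) μ).restrictScalars ℝ

theorem suEigenspace_le_suLie (μ : ℂ) :
    suEigenspace μ ≤ (suLie (Fin 2 × Fin 2)).toSubmodule :=
  inf_le_left

theorem disjoint_suEigenspace {μ ν : ℂ} (h : μ ≠ ν) :
    Disjoint (suEigenspace μ) (suEigenspace ν) :=
  Submodule.disjoint_def.mpr fun A hμ hν ↦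
    Submodule.disjoint_def.mp (Module.End.disjoint_genEigenspace _ h 1 1) A hμ.2 hν.2

theorem lie_mem_suEigenspace_mul {μ ν : ℂ} {A B : Matrix (Fin 2 × Fin 2) (Fin 2 × Fin 2) ℂ}
    (hA : A ∈ suEigenspace μ) (hB : B ∈ suEigenspace ν) : ⁅A, B⁆ ∈ suEigenspace (μ * ν) :=
  ⟨(suLie _).lie_mem hA.1 hB.1, lie_mem_eigenspace_mul cartanInvolution hA.2 hB.2⟩

theorem trace_conjTranspose_mul_eq_zero {μ ν : ℂ} (hμν : μ * ν ≠ 1)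
    {A B : Matrix (Fin 2 × Fin 2) (Fin 2 × Fin 2) ℂ} (hA : A ∈ suEigenspace μ)
    (hB : B ∈ suEigenspace ν) : (Aᴴ * B).trace = 0 := by
  rw [(mem_suLie.mp hA.1).1, Matrix.neg_mul, Matrix.trace_neg, neg_eq_zero]
  exact trace_mul_eq_zero_of_mem_eigenspace _ hμν hA.2 hB.2

theorem I_smul_kronecker_mem_suEigenspace {P Q : Matrix (Fin 2) (Fin 2) ℂ} {μ : ℂ}
    (hP : P.IsHermitian) (hQ : Q.IsHermitian) (h : P.trace = 0 ∨ Q.trace = 0)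
    (hμ : cartanInvolution (P ⊗ₖ Q) = μ • (P ⊗ₖ Q)) :
    Complex.I • (P ⊗ₖ Q) ∈ suEigenspace μ :=
  ⟨I_smul_kronecker_mem_suLie hP hQ h,
    Submodule.smul_mem (Module.End.eigenspace _ μ) Complex.I (Module.End.mem_eigenspace_iff.mpr hμ)⟩

theorem kLie_le_suEigenspace_one : kLie ≤ suEigenspace 1 := by
  refine Submodule.span_le.mpr (Set.union_subset ?_ ?_)
  · rintro _ ⟨a, rfl⟩
    exact I_smul_kronecker_mem_suEigenspace (isHermitian_pauli a) Matrix.isHermitian_one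
      (.inl (trace_pauli a)) ((cartanInvolution_Iop a).trans (one_smul ℂ _).symm)
  · rintro _ ⟨a, rfl⟩
    exact I_smul_kronecker_mem_suEigenspace Matrix.isHermitian_one (isHermitian_pauli a)
      (.inr (trace_pauli a)) ((cartanInvolution_Sop a).trans (one_smul ℂ _).symm)

theorem mLie_le_suEigenspace_neg_one : mLie ≤ suEigenspace (-1) := by
  refine Submodule.span_le.mpr ?_
  rintro _ ⟨a, b, rfl⟩
  have hθ := cartanInvolution_Iop_mul_Sop a b
  rw [Iop_mul_Sop] at hθ ⊢
  exact I_smul_kronecker_mem_suEigenspace (isHermitian_pauli a) (isHermitian_pauli b)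
    (.inl (trace_pauli a)) (hθ.trans (neg_one_smul ℂ _).symm)

theorem disjoint_mLie_kLie : Disjoint mLie kLie :=
  (disjoint_suEigenspace (by norm_num)).mono mLie_le_suEigenspace_neg_one kLie_le_suEigenspace_one

theorem mLie_sup_kLie_le_suLie : mLie ⊔ kLie ≤ (suLie (Fin 2 × Fin 2)).toSubmodule :=
  sup_le (mLie_le_suEigenspace_neg_one.trans (suEigenspace_le_suLie _))
    (kLie_le_suEigenspace_one.trans (suEigenspace_le_suLie _))

/-- The products `i P ⊗ Q`, with each of `P` and `Q` either `1` or one of the `σ_α`, except for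
`i 1 ⊗ 1`: the union of the generators of `𝔪` and `𝔨`. -/
noncomputable def spinGenerators : Set (Matrix (Fin 2 × Fin 2) (Fin 2 × Fin 2) ℂ) :=
  {A | ∃ a b : Fin 3, A = Complex.I • (Iop a * Sop b)} ∪
    ((Set.range fun a => Complex.I • Iop a) ∪ (Set.range fun a => Complex.I • Sop a))

theorem span_spinGenerators : Submodule.span ℝ spinGenerators = mLie ⊔ kLie :=
  Submodule.span_union _ _

theorem span_insert_I_smul_one_spinGenerators :
    Submodule.span ℂ (insert (Complex.I • 1) spinGenerators) = ⊤ := by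
  refine eq_top_iff.mpr ?_
  rw [← map₂_kroneckerBilinear_top, ← span_insert_one_range_pauli, Submodule.map₂_span_span,
    Submodule.span_le]
  rintro _ ⟨P, rfl | ⟨a, rfl⟩, Q, rfl | ⟨b, rfl⟩, rfl⟩ <;>
    refine (Submodule.smul_mem_iff _ Complex.I_ne_zero).mp (Submodule.subset_span ?_)
  · exact .inl (congrArg _ Matrix.one_kronecker_one)
  · exact .inr (.inr (.inr ⟨b, rfl⟩))
  · exact .inr (.inr (.inl ⟨a, rfl⟩))
  · exact .inr (.inl ⟨a, b, congrArg _ (Iop_mul_Sop a b).symm⟩)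

theorem insert_I_smul_one_spinGenerators_subset_skewAdjoint :
    insert (Complex.I • 1) spinGenerators ⊆
      (skewAdjoint (Matrix (Fin 2 × Fin 2) (Fin 2 × Fin 2) ℂ) : Set _) := by
  refine Set.insert_subset ?_ fun A hA ↦ ?_
  · simp [skewAdjoint.mem_iff]
  · exact (mem_suLie.mp (mLie_sup_kLie_le_suLie (span_spinGenerators ▸ Submodule.subset_span hA))).1

theorem mLie_sup_kLie : mLie ⊔ kLie = (suLie (Fin 2 × Fin 2)).toSubmodule := by
  refine le_antisymm mLie_sup_kLie_le_suLie fun A hA ↦ ?_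
  have hA_span : A ∈ Submodule.span ℝ (insert (Complex.I • 1) spinGenerators) :=
    mem_span_real_of_mem_skewAdjoint insert_I_smul_one_spinGenerators_subset_skewAdjoint
      (mem_suLie.mp hA).1 (span_insert_I_smul_one_spinGenerators ▸ Submodule.mem_top)
  obtain ⟨c, B, hB, rfl⟩ := Submodule.mem_span_insert.mp hA_span
  rw [span_spinGenerators] at hB
  have hc : c = 0 := by
    have trace_eq_zero := (mem_suLie.mp hA).2
    simpa [Matrix.trace_add, (mem_suLie.mp (mLie_sup_kLie_le_suLie hB)).2] using trace_eq_zero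
  simpa [hc] using hB

theorem kLie_eq_suEigenspace_one : kLie = suEigenspace 1 := by
  rw [← sup_inf_eq_left_of_disjoint kLie_le_suEigenspace_one mLie_le_suEigenspace_neg_one
    (disjoint_suEigenspace (by norm_num)), sup_comm, mLie_sup_kLie,
    inf_eq_right.mpr (suEigenspace_le_suLie 1)]

theorem mLie_eq_suEigenspace_neg_one : mLie = suEigenspace (-1) := by
  rw [← sup_inf_eq_left_of_disjoint mLie_le_suEigenspace_neg_one kLie_le_suEigenspace_one
    (disjoint_suEigenspace (by norm_num)), mLie_sup_kLie,
    inf_eq_right.mpr (suEigenspace_le_suLie (-1))]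

/- STATEMENT 16: `su(4) = 𝔪 ⊕ 𝔨` is an orthogonal direct sum (w.r.t. `⟨A,B⟩ = tr(A†B)`)
and `[𝔨,𝔨] ⊆ 𝔨`, `[𝔪,𝔨] ⊆ 𝔪`, `[𝔪,𝔪] ⊆ 𝔨`, i.e. `(su(4), 𝔨)` is a symmetric pair. -/
theorem stmt_16 :
    -- `su(4) = 𝔪 + 𝔨` …
    (∀ A : Matrix (Fin 2 × Fin 2) (Fin 2 × Fin 2) ℂ,
      (Aᴴ = -A ∧ A.trace = 0) ↔ ∃ M ∈ mLie, ∃ X ∈ kLie, A = M + X) ∧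
    -- … the sum is direct …
    mLie ⊓ kLie = ⊥ ∧
    -- … and orthogonal w.r.t. `⟨A,B⟩ = tr(A†B)` …
    (∀ M ∈ mLie, ∀ X ∈ kLie, (Mᴴ * X).trace = 0) ∧
    -- … with the commutation relations of a symmetric pair:
    (∀ A ∈ kLie, ∀ B ∈ kLie, A * B - B * A ∈ kLie) ∧
    (∀ A ∈ mLie, ∀ B ∈ kLie, A * B - B * A ∈ mLie) ∧
    (∀ A ∈ mLie, ∀ B ∈ mLie, A * B - B * A ∈ kLie) := by
  refine ⟨fun A ↦ ?_, disjoint_mLie_kLie.eq_bot, ?_⟩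
  · rw [← mem_suLie, ← LieSubalgebra.mem_toSubmodule, ← mLie_sup_kLie, Submodule.mem_sup]
    simp only [eq_comm]
  rw [kLie_eq_suEigenspace_one, mLie_eq_suEigenspace_neg_one]
  refine ⟨fun M hM X hX ↦ trace_conjTranspose_mul_eq_zero (by norm_num) hM hX,
    fun A hA B hB ↦ ?_, fun A hA B hB ↦ ?_, fun A hA B hB ↦ ?_⟩ <;>
    simpa [Ring.lie_def] using lie_mem_suEigenspace_mul hA hB
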